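/- For correlated Erdős–Rényi random graphs (G_a, G_b), the normalized quantity (1/C(n,2)) log(1/max_{π ∈ S_n} P_{G_a,G_b}(G_a, π(G_b))) converges to H(A,B) in probability as n → ∞. -/

import Mathlib

open Finset Filter

namespace GraphSI

/-- A (weighted) graph on vertex set `Fin n` with marks in `α`, identified with the
function assigning a mark to each unordered pair of vertices. -/
abbrev Graph (n : ℕ) (α : Type*) := Sym2 (Fin n) → α

/-- Relabeling of the vertices of a graph by a permutation `π`:
the `(i,j)` entry of `π(g)` is the `(π⁻¹ i, π⁻¹ j)` entry of `g`. -/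
def relabel {n : ℕ} {α : Type*} (π : Equiv.Perm (Fin n)) (g : Graph n α) : Graph n α :=
  fun e => g (e.map π.symm)

/-- The unordered pairs `{i,j}` with `i ≠ j` (i.e. the pairs `i < j`). -/
def edgePairs (n : ℕ) : Finset (Sym2 (Fin n)) :=
  Finset.univ.filter (fun e => ¬ e.IsDiag)

/-- Joint probability of a pair of graphs under the correlated Erdős–Rényi model with
per-edge joint mark distribution `P`. -/
def cer {n : ℕ} {α β : Type*} (P : α × β → ℝ) (ga : Graph n α) (gb : Graph n β) : ℝ :=
  ∏ e ∈ edgePairs n, P (ga e, gb e)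

/-- Probability of a graph under the Erdős–Rényi model with i.i.d. edge marks `P`. -/
def erP {n : ℕ} {β : Type*} (P : β → ℝ) (g : Graph n β) : ℝ :=
  ∏ e ∈ edgePairs n, P (g e)

/-- Base-2 Shannon entropy of a pmf on a finite type (with the convention 0 log 0 = 0). -/
noncomputable def H2 {γ : Type*} [Fintype γ] (P : γ → ℝ) : ℝ :=
  ∑ x, P x * Real.logb 2 (P x)⁻¹

/-- Conditional entropy `H(A|B) = H(A,B) - H(B)` for a joint pmf on `α × β`. -/
noncomputable def condH {α β : Type*} [Fintype α] [Fintype β] (P : α × β → ℝ) : ℝ :=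
  H2 P - H2 (fun b => ∑ a, P (a, b))

/-- `C(n,2) = n(n-1)/2` as a real number. -/
def Cn2 (n : ℕ) : ℝ := n.choose 2

/-- Probability of an event under a pmf on a finite sample space. -/
noncomputable def prob {Ω : Type*} [Fintype Ω] (P : Ω → ℝ) (E : Set Ω) : ℝ :=
  ∑ ω, E.indicator P ω

/-- Maximum of a real-valued function over all permutations of `[n]`. -/
def maxPerm {n : ℕ} (f : Equiv.Perm (Fin n) → ℝ) : ℝ :=
  Finset.univ.sup' ⟨1, Finset.mem_univ 1⟩ f

/-!
The identity is one of the permutations, so `M := max_π P(G_a, π(G_b))` is at least `P(G_a, G_b)`,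
whose normalized self-information converges to `H(A, B)` by the law of large numbers over the edges.
Conversely `M` rarely beats `P(G_a, G_b)` by a factor `2 ^ (ε C(n, 2))`: on that event
`P(G_a, G_b)` is at most `2 ^ (-ε C(n, 2)) ∑_π P(G_a, π(G_b))`, and each of the `n!` summands has
the same total mass as `P(G_a, G_b)`, while `n! 2 ^ (-ε C(n, 2)) → 0`.

The marks on the `n` loops `s(i, i)` are free in `Graph n α`, so under `prob` the CER weights have
total mass `|α × β| ^ n` rather than `1`. Chebyshev's inequality is then too weak for the law of
large numbers; a Chernoff bound, exponential in `C(n, 2)`, absorbs this factor.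
-/

section Asymptotics

lemma exists_pos_sum_mul_exp_lt_one {γ : Type*} [Fintype γ] {P Y : γ → ℝ} (hP1 : ∑ x, P x = 1)
    (hY : ∑ x, P x * Y x < 0) :
    ∃ s : ℝ, 0 < s ∧ ∑ x, P x * Real.exp (s * Y x) < 1 := by
  have hderiv : HasDerivAt (fun s : ℝ => ∑ x, P x * Real.exp (s * Y x))
      (∑ x, P x * (Real.exp (0 * Y x) * (1 * Y x))) 0 :=
    HasDerivAt.fun_sum fun x _ => (((hasDerivAt_id 0).mul_const (Y x)).exp).const_mul (P x)
  simp only [zero_mul, Real.exp_zero, one_mul] at hderiv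
  have hslope := hderiv.tendsto_slope_zero_right.eventually (gt_mem_nhds hY)
  obtain ⟨s, hs, hs0⟩ := (hslope.and self_mem_nhdsWithin).exists
  simp only [zero_add, zero_mul, Real.exp_zero, mul_one, hP1, smul_eq_mul] at hs
  exact ⟨s, hs0, sub_neg.1 (neg_of_mul_neg_right hs (inv_nonneg.2 (le_of_lt hs0)))⟩

lemma pow_choose_two_sq {R : Type*} [Monoid R] (q : R) (n : ℕ) :
    (q ^ 2) ^ n.choose 2 = (q ^ (n - 1)) ^ n := by
  rw [← pow_mul, ← pow_mul, Nat.choose_two_right,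
    Nat.mul_div_cancel' (Nat.even_mul_pred_self n).two_dvd, mul_comm]

lemma tendsto_mul_self_mul_pow_pred (K : ℝ) {q : ℝ} (hq0 : 0 ≤ q) (hq1 : q < 1) :
    Tendsto (fun n : ℕ => K * n * q ^ (n - 1)) atTop (nhds 0) := by
  rw [← tendsto_add_atTop_iff_nat 1]
  have hlim := ((tendsto_self_mul_const_pow_of_lt_one hq0 hq1).add
    (tendsto_pow_atTop_nhds_zero_of_lt_one hq0 hq1)).const_mul K
  rw [add_zero, mul_zero] at hlim
  refine hlim.congr fun n => ?_
  push_cast [Nat.add_sub_cancel]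
  ring

lemma tendsto_pow_mul_factorial_mul_pow_choose_two {K r : ℝ} (hK : 0 ≤ K) (hr0 : 0 ≤ r)
    (hr1 : r < 1) :
    Tendsto (fun n : ℕ => K ^ n * n.factorial * r ^ n.choose 2) atTop (nhds 0) := by
  have hq0 := Real.sqrt_nonneg r
  have hlim := tendsto_mul_self_mul_pow_pred K hq0 ((Real.sqrt_lt' one_pos).2 (by simpa using hr1))
  refine squeeze_zero' (Eventually.of_forall fun n => by positivity) ?_ hlim
  filter_upwards [hlim.eventually (gt_mem_nhds one_pos), eventually_ne_atTop 0] with n hlt hn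
  have hfactorial : (n.factorial : ℝ) ≤ (n : ℝ) ^ n := by exact_mod_cast Nat.factorial_le_pow n
  calc K ^ n * n.factorial * r ^ n.choose 2
      = K ^ n * n.factorial * (√r ^ (n - 1)) ^ n := by
        rw [← pow_choose_two_sq, Real.sq_sqrt hr0]
    _ ≤ K ^ n * (n : ℝ) ^ n * (√r ^ (n - 1)) ^ n := by gcongr
    _ = (K * n * √r ^ (n - 1)) ^ n := by rw [mul_pow, mul_pow]
    _ ≤ K * n * √r ^ (n - 1) := pow_le_of_le_one (by positivity) hlt.le hn

lemma tendsto_pow_mul_pow_choose_two {K r : ℝ} (hK : 0 ≤ K) (hr0 : 0 ≤ r) (hr1 : r < 1) :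
    Tendsto (fun n : ℕ => K ^ n * r ^ n.choose 2) atTop (nhds 0) := by
  refine squeeze_zero (fun n => by positivity) (fun n => ?_)
    (tendsto_pow_mul_factorial_mul_pow_choose_two hK hr0 hr1)
  have hfactorial : (1 : ℝ) ≤ n.factorial := by exact_mod_cast Nat.factorial_pos n
  gcongr
  exact le_mul_of_one_le_right (by positivity) hfactorial

end Asymptotics

section Prob

variable {Ω : Type*} [Fintype Ω] {P : Ω → ℝ}

lemma prob_nonneg (hP : ∀ ω, 0 ≤ P ω) (E : Set Ω) : 0 ≤ prob P E :=
  Finset.sum_nonneg fun ω _ => Set.indicator_nonneg (fun ω _ => hP ω) ω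

lemma prob_le_sum {Q : Ω → ℝ} {E : Set Ω} (hQ : ∀ ω, 0 ≤ Q ω)
    (hPQ : ∀ ω ∈ E, 0 < P ω → P ω ≤ Q ω) : prob P E ≤ ∑ ω, Q ω := by
  refine Finset.sum_le_sum fun ω _ => Set.indicator_apply_le' (fun hω => ?_) fun _ => hQ ω
  rcases lt_or_ge 0 (P ω) with hpos | hneg
  · exact hPQ ω hω hpos
  · exact hneg.trans (hQ ω)

lemma prob_mono {E F : Set Ω} (hP : ∀ ω, 0 ≤ P ω) (h : ∀ ω ∈ E, 0 < P ω → ω ∈ F) :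
    prob P E ≤ prob P F :=
  prob_le_sum (Set.indicator_nonneg fun ω _ => hP ω) fun ω hω hpos =>
    (Set.indicator_of_mem (h ω hω hpos) P).ge

lemma prob_le_prob_add_prob {E F G : Set Ω} (hP : ∀ ω, 0 ≤ P ω)
    (h : ∀ ω ∈ E, 0 < P ω → ω ∈ F ∨ ω ∈ G) : prob P E ≤ prob P F + prob P G := by
  have hF : ∀ ω, 0 ≤ F.indicator P ω := Set.indicator_nonneg fun ω _ => hP ω
  have hG : ∀ ω, 0 ≤ G.indicator P ω := Set.indicator_nonneg fun ω _ => hP ω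
  rw [prob.eq_def P F, prob.eq_def P G, ← Finset.sum_add_distrib]
  refine prob_le_sum (fun ω => add_nonneg (hF ω) (hG ω)) fun ω hω hpos => ?_
  rcases h ω hω hpos with hmem | hmem
  · exact (Set.indicator_of_mem hmem P).ge.trans (le_add_of_nonneg_right (hG ω))
  · exact (Set.indicator_of_mem hmem P).ge.trans (le_add_of_nonneg_left (hF ω))

end Prob

section MaxPerm

variable {n : ℕ} {f : Equiv.Perm (Fin n) → ℝ}

lemma le_maxPerm (f : Equiv.Perm (Fin n) → ℝ) (π : Equiv.Perm (Fin n)) : f π ≤ maxPerm f :=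
  Finset.le_sup' f (Finset.mem_univ π)

lemma maxPerm_le_sum (hf : ∀ π, 0 ≤ f π) : maxPerm f ≤ ∑ π, f π :=
  Finset.sup'_le _ _ fun _ hπ => Finset.single_le_sum (fun σ _ => hf σ) hπ

end MaxPerm

section Relabel

variable {n : ℕ} {α : Type*}

lemma relabel_one (g : Graph n α) : relabel 1 g = g :=
  funext fun e => congrArg g (congrFun Sym2.map_id e)

lemma relabel_symm_relabel (π : Equiv.Perm (Fin n)) (g : Graph n α) :
    relabel π.symm (relabel π g) = g := by
  funext e
  simp [relabel, Sym2.map_map]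

lemma relabel_bijective (π : Equiv.Perm (Fin n)) :
    Function.Bijective (relabel π : Graph n α → Graph n α) :=
  Function.bijective_iff_has_inverse.2
    ⟨relabel π.symm, relabel_symm_relabel π, relabel_symm_relabel π.symm⟩

end Relabel

section Edges

lemma card_edgePairs (n : ℕ) : (edgePairs n).card = n.choose 2 := by
  simpa only [Fintype.card_subtype, Fintype.card_fin, edgePairs] using
    Sym2.card_subtype_not_diag (α := Fin n)

lemma card_compl_edgePairs (n : ℕ) : (edgePairs n)ᶜ.card = n := by
  simpa only [Fintype.card_subtype, Fintype.card_fin, edgePairs, Finset.compl_filter, not_not] using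
    Sym2.card_subtype_diag (α := Fin n)

lemma Cn2_pos {n : ℕ} (hn : 2 ≤ n) : 0 < Cn2 n := by
  exact Nat.cast_pos.2 (Nat.choose_pos hn)

lemma sum_prod_comp {ι γ R : Type*} [Fintype ι] [DecidableEq ι] [Fintype γ] [CommSemiring R]
    (E : Finset ι) (f : γ → R) :
    ∑ x : ι → γ, ∏ e ∈ E, f (x e) = (∑ c, f c) ^ E.card * (Fintype.card γ : R) ^ Eᶜ.card := by
  calc ∑ x : ι → γ, ∏ e ∈ E, f (x e)
      = ∑ x : ι → γ, ∏ e, (if e ∈ E then f (x e) else 1) := by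
        simp only [Finset.prod_ite_mem, Finset.univ_inter]
    _ = ∏ e, ∑ c, (if e ∈ E then f c else 1) :=
        (Fintype.prod_sum fun e c => if e ∈ E then f c else 1).symm
    _ = (∏ _e ∈ E, ∑ c, f c) * ∏ _e ∈ Eᶜ, ∑ _c : γ, (1 : R) := by
        rw [← Finset.prod_mul_prod_compl E]
        congr 1 <;> refine Finset.prod_congr rfl fun e he => ?_
        · simp only [he, if_true]
        · simp only [Finset.mem_compl.1 he, if_false]
    _ = (∑ c, f c) ^ E.card * (Fintype.card γ : R) ^ Eᶜ.card := by
        simp only [Finset.prod_const, Finset.sum_const, Finset.card_univ, nsmul_one]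

end Edges

section EdgeMean

variable {n : ℕ} {α β : Type*}

/-- The average of the edge statistic `Y` over the pairs `i < j` of a pair of graphs. -/
noncomputable def edgeMean (Y : α × β → ℝ) (p : Graph n α × Graph n β) : ℝ :=
  (Cn2 n)⁻¹ * ∑ e ∈ edgePairs n, Y (p.1 e, p.2 e)

lemma sum_sub_const_nonneg_iff_le_edgeMean (hn : 2 ≤ n) (Y : α × β → ℝ) (c : ℝ)
    (p : Graph n α × Graph n β) :
    0 ≤ ∑ e ∈ edgePairs n, (Y (p.1 e, p.2 e) - c) ↔ c ≤ edgeMean Y p := by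
  rw [edgeMean, le_inv_mul_iff₀ (Cn2_pos hn), Finset.sum_sub_distrib, Finset.sum_const,
    card_edgePairs, nsmul_eq_mul, sub_nonneg, Cn2]

lemma edgeMean_neg (Y : α × β → ℝ) (p : Graph n α × Graph n β) :
    edgeMean (fun x => -Y x) p = -edgeMean Y p := by
  rw [edgeMean, edgeMean, Finset.sum_neg_distrib, mul_neg]

end EdgeMean

section CER

variable {n : ℕ} {α β : Type*} {P : α × β → ℝ}

lemma cer_nonneg (hP0 : ∀ x, 0 ≤ P x) (ga : Graph n α) (gb : Graph n β) : 0 ≤ cer P ga gb :=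
  Finset.prod_nonneg fun _ _ => hP0 _

lemma cer_mul_exp (P Y : α × β → ℝ) (ga : Graph n α) (gb : Graph n β) :
    cer (fun x => P x * Real.exp (Y x)) ga gb =
      cer P ga gb * Real.exp (∑ e ∈ edgePairs n, Y (ga e, gb e)) := by
  simp only [cer, Finset.prod_mul_distrib, Real.exp_sum]

lemma logb_inv_cer (b : ℝ) {ga : Graph n α} {gb : Graph n β} (h : cer P ga gb ≠ 0) :
    Real.logb b (cer P ga gb)⁻¹ = ∑ e ∈ edgePairs n, Real.logb b (P (ga e, gb e))⁻¹ := by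
  rw [cer, ← Finset.prod_inv_distrib]
  exact Real.logb_prod _ _ fun e he => inv_ne_zero (Finset.prod_ne_zero_iff.1 h e he)

lemma cer_le_maxPerm (P : α × β → ℝ) (ga : Graph n α) (gb : Graph n β) :
    cer P ga gb ≤ maxPerm fun π => cer P ga (relabel π gb) := by
  simpa only [relabel_one] using le_maxPerm (fun π => cer P ga (relabel π gb)) 1

variable [Fintype α] [Fintype β]

lemma sum_cer (n : ℕ) (f : α × β → ℝ) :
    ∑ p : Graph n α × Graph n β, cer f p.1 p.2 =
      (∑ c, f c) ^ n.choose 2 * (Fintype.card (α × β) : ℝ) ^ n := by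
  have hsum := sum_prod_comp (edgePairs n) f
  rw [card_edgePairs, card_compl_edgePairs] at hsum
  rw [← hsum]
  exact (Fintype.sum_equiv (Equiv.arrowProdEquivProdArrow _ _ _) _ _ fun _ => rfl).symm

lemma sum_cer_relabel (f : α × β → ℝ) (π : Equiv.Perm (Fin n)) :
    ∑ p : Graph n α × Graph n β, cer f p.1 (relabel π p.2) =
      ∑ p : Graph n α × Graph n β, cer f p.1 p.2 :=
  Fintype.sum_bijective (Prod.map id (relabel π))
    (Function.bijective_id.prodMap (relabel_bijective π)) _ _ fun _ => rfl

end CER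

section LawOfLargeNumbers

variable {α β : Type*} [Fintype α] [Fintype β] {P : α × β → ℝ}

/-- The mass of an event under the correlated Erdős–Rényi model; not normalized, because of the
free loop marks. -/
noncomputable abbrev cerProb {n : ℕ} (P : α × β → ℝ) (E : Set (Graph n α × Graph n β)) : ℝ :=
  prob (fun p => cer P p.1 p.2) E

lemma cerProb_nonneg {n : ℕ} (hP0 : ∀ x, 0 ≤ P x) (E : Set (Graph n α × Graph n β)) :
    0 ≤ cerProb P E :=
  prob_nonneg (fun _ => cer_nonneg hP0 _ _) E

lemma cerProb_sum_nonneg_le (n : ℕ) (hP0 : ∀ x, 0 ≤ P x) (Y : α × β → ℝ) :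
    cerProb P {p : Graph n α × Graph n β | 0 ≤ ∑ e ∈ edgePairs n, Y (p.1 e, p.2 e)} ≤
      (Fintype.card (α × β) : ℝ) ^ n * (∑ x, P x * Real.exp (Y x)) ^ n.choose 2 := by
  rw [mul_comm, ← sum_cer]
  refine prob_le_sum (fun p => cer_nonneg (fun x => mul_nonneg (hP0 x) (Real.exp_nonneg _)) _ _)
    fun p hp hpos => ?_
  rw [cer_mul_exp]
  exact le_mul_of_one_le_right hpos.le (Real.one_le_exp hp)

lemma tendsto_cerProb_sum_nonneg (hP0 : ∀ x, 0 ≤ P x) (hP1 : ∑ x, P x = 1) {Y : α × β → ℝ}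
    (hY : ∑ x, P x * Y x < 0) :
    Tendsto (fun n : ℕ => cerProb P
      {p : Graph n α × Graph n β | 0 ≤ ∑ e ∈ edgePairs n, Y (p.1 e, p.2 e)}) atTop (nhds 0) := by
  obtain ⟨s, hs, hlt⟩ := exists_pos_sum_mul_exp_lt_one hP1 hY
  refine squeeze_zero (fun n => cerProb_nonneg hP0 _) (fun n => ?_)
    (tendsto_pow_mul_pow_choose_two (Nat.cast_nonneg (Fintype.card (α × β)))
      (Finset.sum_nonneg fun x _ => mul_nonneg (hP0 x) (Real.exp_nonneg _)) hlt)
  simpa only [← Finset.mul_sum, mul_nonneg_iff_of_pos_left hs] using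
    cerProb_sum_nonneg_le n hP0 fun x => s * Y x

lemma tendsto_cerProb_le_edgeMean (hP0 : ∀ x, 0 ≤ P x) (hP1 : ∑ x, P x = 1) {Y : α × β → ℝ}
    {c : ℝ} (hc : ∑ x, P x * Y x < c) :
    Tendsto (fun n : ℕ => cerProb P {p : Graph n α × Graph n β | c ≤ edgeMean Y p})
      atTop (nhds 0) := by
  have hmean : ∑ x, P x * (Y x - c) < 0 := by
    simpa only [mul_sub, Finset.sum_sub_distrib, ← Finset.sum_mul, hP1, one_mul, sub_neg] using hc
  refine (tendsto_cerProb_sum_nonneg hP0 hP1 hmean).congr' ?_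
  filter_upwards [eventually_ge_atTop 2] with n hn
  simp only [sum_sub_const_nonneg_iff_le_edgeMean hn]

theorem tendsto_cerProb_lt_abs_edgeMean_sub (hP0 : ∀ x, 0 ≤ P x) (hP1 : ∑ x, P x = 1)
    (Y : α × β → ℝ) {δ : ℝ} (hδ : 0 < δ) :
    Tendsto (fun n : ℕ => cerProb P
      {p : Graph n α × Graph n β | δ < |edgeMean Y p - ∑ x, P x * Y x|}) atTop (nhds 0) := by
  set μ := ∑ x, P x * Y x
  have hupper := tendsto_cerProb_le_edgeMean hP0 hP1 (Y := Y) (lt_add_of_pos_right μ hδ)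
  have hneg : ∑ x, P x * -Y x < -μ + δ := by
    simpa only [mul_neg, Finset.sum_neg_distrib] using lt_add_of_pos_right (-μ) hδ
  have hlower := tendsto_cerProb_le_edgeMean hP0 hP1 hneg
  refine squeeze_zero (fun n => cerProb_nonneg hP0 _) (fun n => ?_)
    (by simpa only [add_zero] using hupper.add hlower)
  refine prob_le_prob_add_prob (fun _ => cer_nonneg hP0 _ _) fun p hp _ => ?_
  rw [Set.mem_ofPred_eq, lt_abs] at hp
  simp only [Set.mem_ofPred_eq, edgeMean_neg]
  exact hp.imp (fun h => by linarith) fun h => by linarith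

end LawOfLargeNumbers

section SelfInformation

/-- The self-information, in bits per vertex pair, of an outcome of probability `x` in a model of
graphs on `n` vertices. By the junk values of `⁻¹` it is `0`
when `x = 0` or `n < 2`. -/
noncomputable def infoRate (n : ℕ) (x : ℝ) : ℝ :=
  (Cn2 n)⁻¹ * Real.logb 2 x⁻¹

lemma infoRate_anti (n : ℕ) {x y : ℝ} (hx : 0 < x) (hxy : x ≤ y) : infoRate n y ≤ infoRate n x := by
  refine mul_le_mul_of_nonneg_left ?_ (inv_nonneg.2 (Nat.cast_nonneg _))
  rw [Real.logb_inv, Real.logb_inv]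
  exact neg_le_neg (Real.logb_le_logb_of_le one_lt_two hx hxy)

lemma le_rpow_neg_pow_mul_of_lt_infoRate_sub {n : ℕ} (hn : 2 ≤ n) {x y ε : ℝ} (hx : 0 < x)
    (hy : 0 < y) (h : ε < infoRate n x - infoRate n y) :
    x ≤ ((2 : ℝ) ^ (-ε)) ^ n.choose 2 * y := by
  have hlog : Cn2 n * ε < Real.logb 2 y - Real.logb 2 x := by
    rw [infoRate, infoRate, ← mul_sub, lt_inv_mul_iff₀ (Cn2_pos hn), Real.logb_inv,
      Real.logb_inv] at h
    linarith
  rw [← Real.logb_le_logb one_lt_two hx (by positivity), Real.logb_mul (by positivity) hy.ne',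
    Real.logb_pow, Real.logb_rpow two_pos (by norm_num)]
  rw [Cn2] at hlog
  linarith

variable {α β : Type*} {P : α × β → ℝ}

lemma infoRate_cer {n : ℕ} (p : Graph n α × Graph n β) (h : cer P p.1 p.2 ≠ 0) :
    infoRate n (cer P p.1 p.2) = edgeMean (fun x => Real.logb 2 (P x)⁻¹) p := by
  rw [infoRate, edgeMean, logb_inv_cer 2 h]

variable [Fintype α] [Fintype β]

theorem tendsto_cerProb_lt_abs_infoRate_cer_sub_H2 (hP0 : ∀ x, 0 ≤ P x) (hP1 : ∑ x, P x = 1)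
    {δ : ℝ} (hδ : 0 < δ) :
    Tendsto (fun n : ℕ => cerProb P
      {p : Graph n α × Graph n β | δ < |infoRate n (cer P p.1 p.2) - H2 P|}) atTop (nhds 0) := by
  refine squeeze_zero (fun n => cerProb_nonneg hP0 _)
    (fun n => prob_mono (fun _ => cer_nonneg hP0 _ _) fun p hp hpos => ?_)
    (tendsto_cerProb_lt_abs_edgeMean_sub hP0 hP1 (fun x => Real.logb 2 (P x)⁻¹) hδ)
  rwa [Set.mem_ofPred_eq, infoRate_cer p hpos.ne'] at hp

lemma cerProb_lt_infoRate_cer_sub_infoRate_maxPerm_le {n : ℕ} (hn : 2 ≤ n)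
    (hP0 : ∀ x, 0 ≤ P x) (hP1 : ∑ x, P x = 1) (ε : ℝ) :
    cerProb P {p : Graph n α × Graph n β | ε < infoRate n (cer P p.1 p.2) -
        infoRate n (maxPerm fun π => cer P p.1 (relabel π p.2))} ≤
      (Fintype.card (α × β) : ℝ) ^ n * n.factorial * ((2 : ℝ) ^ (-ε)) ^ n.choose 2 := by
  have hsum : ∑ p : Graph n α × Graph n β, ∑ π, cer P p.1 (relabel π p.2) =
      (Fintype.card (α × β) : ℝ) ^ n * n.factorial := by
    rw [Finset.sum_comm]
    simp only [sum_cer_relabel, sum_cer, hP1, one_pow, one_mul, Finset.sum_const,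
      Finset.card_univ, Fintype.card_perm, Fintype.card_fin, nsmul_eq_mul]
    rw [mul_comm]
  have hnonneg (p : Graph n α × Graph n β) (π) : 0 ≤ cer P p.1 (relabel π p.2) :=
    cer_nonneg hP0 _ _
  rw [← hsum, mul_comm, Finset.mul_sum]
  refine prob_le_sum (fun p => mul_nonneg (by positivity) (Finset.sum_nonneg fun π _ =>
    hnonneg p π)) fun p hp hpos => ?_
  refine (le_rpow_neg_pow_mul_of_lt_infoRate_sub hn hpos
    (hpos.trans_le (cer_le_maxPerm P p.1 p.2)) hp).trans ?_
  gcongr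
  exact maxPerm_le_sum (hnonneg p)

theorem tendsto_cerProb_lt_infoRate_cer_sub_infoRate_maxPerm (hP0 : ∀ x, 0 ≤ P x)
    (hP1 : ∑ x, P x = 1) {ε : ℝ} (hε : 0 < ε) :
    Tendsto (fun n : ℕ => cerProb P {p : Graph n α × Graph n β |
      ε < infoRate n (cer P p.1 p.2) -
        infoRate n (maxPerm fun π => cer P p.1 (relabel π p.2))}) atTop (nhds 0) := by
  refine squeeze_zero' (Eventually.of_forall fun n => cerProb_nonneg hP0 _) ?_
    (tendsto_pow_mul_factorial_mul_pow_choose_two (Nat.cast_nonneg (Fintype.card (α × β)))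
      (by positivity) (Real.rpow_lt_one_of_one_lt_of_neg one_lt_two (neg_lt_zero.2 hε)))
  filter_upwards [eventually_ge_atTop 2] with n hn
  exact cerProb_lt_infoRate_cer_sub_infoRate_maxPerm_le hn hP0 hP1 ε

end SelfInformation

/-- Under the CER model with fixed per-edge distribution `P_{A,B}`,
`C(n,2)⁻¹ log(1/max_{π ∈ S_n} P(Gₐ, π(G_b)))` converges to `H(A,B)` in probability. -/
theorem stmt3 {α β : Type*} [Fintype α] [Fintype β]
    (P : α × β → ℝ) (hP0 : ∀ x, 0 ≤ P x) (hP1 : ∑ x, P x = 1) :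
    ∀ δ : ℝ, 0 < δ →
      Filter.Tendsto (fun n : ℕ =>
          prob (fun p : Graph n α × Graph n β => cer P p.1 p.2)
            {p : Graph n α × Graph n β |
              δ < |(Cn2 n)⁻¹ *
                  Real.logb 2 (maxPerm fun π => cer P p.1 (relabel π p.2))⁻¹ - H2 P|})
        Filter.atTop (nhds 0) := by
  intro δ hδ
  have haep := tendsto_cerProb_lt_abs_infoRate_cer_sub_H2 hP0 hP1 (half_pos hδ)
  have hgap := tendsto_cerProb_lt_infoRate_cer_sub_infoRate_maxPerm hP0 hP1 (half_pos hδ)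
  refine squeeze_zero (fun n => cerProb_nonneg hP0 _) (fun n => ?_)
    (by simpa only [add_zero] using haep.add hgap)
  refine prob_le_prob_add_prob (fun _ => cer_nonneg hP0 _ _) fun p hp hpos => ?_
  set M := maxPerm fun π => cer P p.1 (relabel π p.2)
  have hmono : infoRate n M ≤ infoRate n (cer P p.1 p.2) :=
    infoRate_anti n hpos (cer_le_maxPerm P p.1 p.2)
  have hdev : δ < |infoRate n M - infoRate n (cer P p.1 p.2)| +
      |infoRate n (cer P p.1 p.2) - H2 P| := hp.trans_le (abs_sub_le _ _ _)
  rw [abs_sub_comm, abs_of_nonneg (sub_nonneg.2 hmono)] at hdev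
  by_contra! hcon
  simp only [Set.mem_ofPred_eq, not_lt] at hcon
  linarith

end GraphSI
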